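/- Satisfiability of regular graph constraints over the class of heaps is decidable: for graphs whose node set is a finite type, the predicate 'there exists a heap H such that H → G'' is a decidable predicate of the graph G'. -/

import Mathlib

universe u v w

/-- A (pre)graph: a node set `V` inside an ambient type, two edge relations
`s1` and `s2`, and distinguished constants `null` and `root`. -/
structure PreGraph (α : Type u) where
  V : Set α
  s1 : α → α → Prop
  s2 : α → α → Prop
  null : α
  root : α

namespace PreGraph

/-- `G` is a graph: `V` is finite, `root` and `null` are distinct nodes of `V`,
edges lie within `V`, and `⟨null, x⟩ ∈ sᵢ` iff `x = null`. -/
def IsGraph {α : Type u} (G : PreGraph α) : Prop :=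
  G.V.Finite ∧
  G.null ∈ G.V ∧ G.root ∈ G.V ∧ G.root ≠ G.null ∧
  (∀ x y, G.s1 x y → x ∈ G.V ∧ y ∈ G.V) ∧
  (∀ x y, G.s2 x y → x ∈ G.V ∧ y ∈ G.V) ∧
  (∀ x, G.s1 G.null x ↔ x = G.null) ∧
  (∀ x, G.s2 G.null x ↔ x = G.null)

/-- `h` is a homomorphism from `G` to `G'`. -/
def IsHom {α : Type u} {β : Type v} (G : PreGraph α) (G' : PreGraph β) (h : α → β) : Prop :=
  (∀ x ∈ G.V, h x ∈ G'.V) ∧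
  (∀ x y, G.s1 x y → G'.s1 (h x) (h y)) ∧
  (∀ x y, G.s2 x y → G'.s2 (h x) (h y)) ∧
  (∀ x ∈ G.V, (h x = G'.root ↔ x = G.root)) ∧
  (∀ x ∈ G.V, (h x = G'.null ↔ x = G.null))

/-- `G → G'` : there exists a homomorphism from `G` to `G'`. -/
def Maps {α : Type u} {β : Type v} (G : PreGraph α) (G' : PreGraph β) : Prop :=
  ∃ h : α → β, IsHom G G' h

/-- An edge of `G` (either an `s1`- or an `s2`-edge). -/
def edge {α : Type u} (G : PreGraph α) (x y : α) : Prop := G.s1 x y ∨ G.s2 x y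

/-- `G` is a heap: a graph in which `s1` and `s2` are total functions on `V`
and every node other than `null` is reachable from `root`. -/
def IsHeap {α : Type u} (G : PreGraph α) : Prop :=
  IsGraph G ∧
  (∀ x ∈ G.V, ∃! y, G.s1 x y) ∧
  (∀ x ∈ G.V, ∃! y, G.s2 x y) ∧
  (∀ x ∈ G.V, x ≠ G.null → Relation.ReflTransGen G.edge G.root x)

end PreGraph

/-- A finite graph whose node set is `Fin n`, with concrete (`Bool`-valued)
edge relations, so that it can be encoded as a natural number. -/
structure FinGraph where
  n : ℕ
  s1 : Fin n → Fin n → Bool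
  s2 : Fin n → Fin n → Bool
  null : Fin n
  root : Fin n
  root_ne_null : root ≠ null
  null_s1 : ∀ x, s1 null x = true ↔ x = null
  null_s2 : ∀ x, s2 null x = true ↔ x = null

/-- The graph (with node set `Fin n`) determined by a `FinGraph`. -/
def FinGraph.toPreGraph (G : FinGraph) : PreGraph (Fin G.n) where
  V := Set.univ
  s1 := fun x y => G.s1 x y = true
  s2 := fun x y => G.s2 x y = true
  null := G.null
  root := G.root

/-- The data `⟨n, s1, s2, null, root⟩` of a finite graph. -/
abbrev GraphData : Type :=
  Σ n : ℕ, (Fin n → Fin n → Bool) × (Fin n → Fin n → Bool) × Fin n × Fin n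

/-- A standard encoding of finite graphs as natural numbers, via the standard
encoding of the data `⟨n, s1, s2, null, root⟩`. -/
def FinGraph.encode (G : FinGraph) : ℕ :=
  Encodable.encode (⟨G.n, G.s1, G.s2, G.null, G.root⟩ : GraphData)

/-- A standard encoding of pairs of finite graphs as natural numbers. -/
def encodePair (G1 G2 : FinGraph) : ℕ := Nat.pair G1.encode G2.encode

/-! The image of a heap `H` under a homomorphism into `G'` is a set of nodes of `G'` which contains
`root'` and in which every node has an `s1`- and an `s2`-successor within the set. Conversely, if
`S` is such a set, then so is `S ∪ {null'}`; choose in it one successor of each kind for every node,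
which for `null'` can only be `null'` itself. The nodes reachable from `root'` along the chosen
edges, together with `null'`, form a heap that is included in `G'`. Whether such an `S` exists is
decided by repeatedly discarding the nodes of `G'` that lack a successor of some kind: what remains
is the largest set in which no successor is missing. -/

section LeftTotalOn

/-- The restriction of `r` to `S` is left-total: every point of `S` has an `r`-successor in `S`.
For `r` an edge relation, this is what the image of a heap retains of the totality of `sᵢ`. -/
def LeftTotalOn {α : Type u} (r : α → α → Prop) (S : Set α) : Prop :=
  ∀ x ∈ S, ∃ y ∈ S, r x y

variable {α : Type u} {β : Type v} {r : α → α → Prop} {S : Set α}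

theorem LeftTotalOn.image {r' : β → β → Prop} {f : α → β} (h : LeftTotalOn r S)
    (hf : ∀ x y, r x y → r' (f x) (f y)) : LeftTotalOn r' (f '' S) := by
  rintro _ ⟨x, hx, rfl⟩
  obtain ⟨y, hy, hxy⟩ := h x hx
  exact ⟨f y, Set.mem_image_of_mem f hy, hf x y hxy⟩

theorem leftTotalOn_image_iff {r' : β → β → Prop} {f : α → β}
    (hf : ∀ x y, r' (f x) (f y) ↔ r x y) : LeftTotalOn r' (f '' S) ↔ LeftTotalOn r S := by
  simp [LeftTotalOn, hf]

theorem LeftTotalOn.insert {a : α} (h : LeftTotalOn r S) (ha : r a a) :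
    LeftTotalOn r (insert a S) := by
  rintro x (rfl | hx)
  · exact ⟨x, Set.mem_insert x S, ha⟩
  · obtain ⟨y, hy, hxy⟩ := h x hx
    exact ⟨y, Set.mem_insert_of_mem a hy, hxy⟩

theorem LeftTotalOn.exists_mapsTo (h : LeftTotalOn r S) :
    ∃ f : α → α, Set.MapsTo f S S ∧ ∀ x ∈ S, r x (f x) := by
  choose! f hf using h
  exact ⟨f, fun x hx => (hf x hx).1, fun x hx => (hf x hx).2⟩

end LeftTotalOn

namespace PreGraph

section Generated

variable {α : Type u} {null root : α} {f₁ f₂ : α → α}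

/-- The nodes of `generated`: `null`, and the points obtained from `root` by applying `f₁` and
`f₂` repeatedly. -/
def generatedNodes (null root : α) (f₁ f₂ : α → α) : Set α :=
  insert null {x | Relation.ReflTransGen (fun a b => f₁ a = b ∨ f₂ a = b) root x}

/-- The graph generated by `root` under the functions `f₁` and `f₂`, whose edges are the
restrictions of the graphs of `f₁` and `f₂` to the generated nodes. -/
def generated (null root : α) (f₁ f₂ : α → α) : PreGraph α where
  V := generatedNodes null root f₁ f₂
  s1 x y := x ∈ generatedNodes null root f₁ f₂ ∧ f₁ x = y
  s2 x y := x ∈ generatedNodes null root f₁ f₂ ∧ f₂ x = y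
  null := null
  root := root

theorem null_mem_generatedNodes : null ∈ generatedNodes null root f₁ f₂ := Set.mem_insert _ _

theorem root_mem_generatedNodes : root ∈ generatedNodes null root f₁ f₂ :=
  Set.mem_insert_of_mem _ Relation.ReflTransGen.refl

theorem generatedNodes_subset {S : Set α} (hnull : null ∈ S) (hroot : root ∈ S)
    (h₁ : Set.MapsTo f₁ S S) (h₂ : Set.MapsTo f₂ S S) : generatedNodes null root f₁ f₂ ⊆ S := by
  rintro x (rfl | hx)
  · exact hnull
  · induction hx with
    | refl => exact hroot
    | tail _ hstep ih =>
      rcases hstep with rfl | rfl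
      exacts [h₁ ih, h₂ ih]

theorem mapsTo_generatedNodes_left (h₁ : f₁ null = null) :
    Set.MapsTo f₁ (generatedNodes null root f₁ f₂) (generatedNodes null root f₁ f₂) := by
  rintro x (rfl | hx)
  · exact h₁.symm ▸ null_mem_generatedNodes
  · exact Set.mem_insert_of_mem _ (hx.tail (Or.inl rfl))

theorem mapsTo_generatedNodes_right (h₂ : f₂ null = null) :
    Set.MapsTo f₂ (generatedNodes null root f₁ f₂) (generatedNodes null root f₁ f₂) := by
  rintro x (rfl | hx)
  · exact h₂.symm ▸ null_mem_generatedNodes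
  · exact Set.mem_insert_of_mem _ (hx.tail (Or.inr rfl))

theorem isGraph_generated (hfin : (generatedNodes null root f₁ f₂).Finite) (hne : root ≠ null)
    (h₁ : f₁ null = null) (h₂ : f₂ null = null) : (generated null root f₁ f₂).IsGraph := by
  refine ⟨hfin, null_mem_generatedNodes, root_mem_generatedNodes, hne, ?_, ?_,
    fun x => ?_, fun x => ?_⟩
  · rintro x _ ⟨hx, rfl⟩
    exact ⟨hx, mapsTo_generatedNodes_left h₁ hx⟩
  · rintro x _ ⟨hx, rfl⟩
    exact ⟨hx, mapsTo_generatedNodes_right h₂ hx⟩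
  · exact ⟨fun hx => hx.2.symm.trans h₁, fun hx => ⟨null_mem_generatedNodes, h₁.trans hx.symm⟩⟩
  · exact ⟨fun hx => hx.2.symm.trans h₂, fun hx => ⟨null_mem_generatedNodes, h₂.trans hx.symm⟩⟩

theorem reflTransGen_edge_generated {x : α}
    (hx : Relation.ReflTransGen (fun a b => f₁ a = b ∨ f₂ a = b) root x) :
    Relation.ReflTransGen (generated null root f₁ f₂).edge root x := by
  induction hx with
  | refl => exact .refl
  | tail ha hstep ih =>
    exact ih.tail (hstep.imp (⟨Set.mem_insert_of_mem _ ha, ·⟩) (⟨Set.mem_insert_of_mem _ ha, ·⟩))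

theorem isHeap_generated (hfin : (generatedNodes null root f₁ f₂).Finite) (hne : root ≠ null)
    (h₁ : f₁ null = null) (h₂ : f₂ null = null) : (generated null root f₁ f₂).IsHeap := by
  refine ⟨isGraph_generated hfin hne h₁ h₂, fun x hx => ?_, fun x hx => ?_, fun x hx hx_ne => ?_⟩
  · exact ⟨f₁ x, ⟨hx, rfl⟩, fun _ hy => hy.2.symm⟩
  · exact ⟨f₂ x, ⟨hx, rfl⟩, fun _ hy => hy.2.symm⟩
  · exact reflTransGen_edge_generated (hx.resolve_left hx_ne)

end Generated

theorem IsHeap.leftTotalOn_s1 {α : Type u} {H : PreGraph α} (hH : H.IsHeap) :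
    LeftTotalOn H.s1 H.V := by
  obtain ⟨⟨_, _, _, _, hV, _⟩, htotal, _⟩ := hH
  intro x hx
  obtain ⟨y, hy, _⟩ := htotal x hx
  exact ⟨y, (hV x y hy).2, hy⟩

theorem IsHeap.leftTotalOn_s2 {α : Type u} {H : PreGraph α} (hH : H.IsHeap) :
    LeftTotalOn H.s2 H.V := by
  obtain ⟨⟨_, _, _, _, _, hV, _⟩, _, htotal, _⟩ := hH
  intro x hx
  obtain ⟨y, hy, _⟩ := htotal x hx
  exact ⟨y, (hV x y hy).2, hy⟩

theorem IsHeap.exists_leftTotalOn_of_maps {α : Type u} {γ : Type w} {G : PreGraph α}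
    {H : PreGraph γ} (hH : H.IsHeap) (h : H.Maps G) :
    ∃ S ⊆ G.V, G.root ∈ S ∧ LeftTotalOn G.s1 S ∧ LeftTotalOn G.s2 S := by
  obtain ⟨f, hV, hs1, hs2, hroot, _⟩ := h
  have root_mem : H.root ∈ H.V := hH.1.2.2.1
  exact ⟨f '' H.V, Set.image_subset_iff.2 hV, ⟨H.root, root_mem, (hroot _ root_mem).2 rfl⟩,
    hH.leftTotalOn_s1.image hs1, hH.leftTotalOn_s2.image hs2⟩

theorem IsGraph.exists_isHeap_maps {α : Type u} {G : PreGraph α} (hG : G.IsGraph) {S : Set α}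
    (hS : S ⊆ G.V) (hroot : G.root ∈ S) (h₁ : LeftTotalOn G.s1 S) (h₂ : LeftTotalOn G.s2 S) :
    ∃ H : PreGraph α, H.IsHeap ∧ H.Maps G := by
  obtain ⟨hfin, null_mem, -, hne, -, -, hnull₁, hnull₂⟩ := hG
  obtain ⟨f₁, hf₁, hs1⟩ := (h₁.insert ((hnull₁ _).2 rfl)).exists_mapsTo
  obtain ⟨f₂, hf₂, hs2⟩ := (h₂.insert ((hnull₂ _).2 rfl)).exists_mapsTo
  have null_fixed₁ : f₁ G.null = G.null := (hnull₁ _).1 (hs1 _ (Set.mem_insert _ _))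
  have null_fixed₂ : f₂ G.null = G.null := (hnull₂ _).1 (hs2 _ (Set.mem_insert _ _))
  have subset_S : generatedNodes G.null G.root f₁ f₂ ⊆ insert G.null S :=
    generatedNodes_subset (Set.mem_insert _ _) (Set.mem_insert_of_mem _ hroot) hf₁ hf₂
  have subset_V : generatedNodes G.null G.root f₁ f₂ ⊆ G.V :=
    subset_S.trans (Set.insert_subset null_mem hS)
  refine ⟨generated G.null G.root f₁ f₂,
    isHeap_generated (hfin.subset subset_V) hne null_fixed₁ null_fixed₂,
    id, subset_V, ?_, ?_, fun _ _ => Iff.rfl, fun _ _ => Iff.rfl⟩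
  · rintro x _ ⟨hx, rfl⟩
    exact hs1 x (subset_S hx)
  · rintro x _ ⟨hx, rfl⟩
    exact hs2 x (subset_S hx)

theorem IsGraph.exists_isHeap_maps_iff {α : Type u} {G : PreGraph α} (hG : G.IsGraph) :
    (∃ (γ : Type u) (H : PreGraph γ), H.IsHeap ∧ H.Maps G) ↔
      ∃ S ⊆ G.V, G.root ∈ S ∧ LeftTotalOn G.s1 S ∧ LeftTotalOn G.s2 S :=
  ⟨fun ⟨_, _, hH, h⟩ => hH.exists_leftTotalOn_of_maps h,
    fun ⟨_, hS, hroot, h₁, h₂⟩ => ⟨α, hG.exists_isHeap_maps hS hroot h₁ h₂⟩⟩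

end PreGraph

section Core

theorem isFixedPt_iterate_length {α : Type u} {f : List α → List α}
    (hf : ∀ l, (f l).Sublist l) (l : List α) : Function.IsFixedPt f (f^[l.length] l) := by
  suffices ∀ n, ∀ l : List α, l.length ≤ n → Function.IsFixedPt f (f^[n] l) from
    this _ l le_rfl
  intro n
  induction n with
  | zero =>
    intro l hl
    obtain rfl : l = [] := List.eq_nil_of_length_eq_zero (Nat.le_zero.1 hl)
    exact List.sublist_nil.1 (hf [])
  | succ n ih =>
    intro l hl
    by_cases hfix : f l = l
    · exact (Function.iterate_fixed hfix (n + 1)).symm ▸ hfix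
    · have hlt : (f l).length < l.length :=
        lt_of_le_of_ne (hf l).length_le fun h => hfix ((hf l).eq_of_length h)
      exact ih (f l) (Nat.le_of_lt_succ (hlt.trans_le hl))

variable {α : Type u} (r₁ r₂ : α → α → Prop) [DecidableRel r₁] [DecidableRel r₂]

/-- One round of the decision procedure: discard the points of `U` that lack an `r₁`-successor or
an `r₂`-successor in `U`. -/
def prune (U : List α) : List α :=
  U.filter fun x => (∃ y ∈ U, r₁ x y) ∧ ∃ y ∈ U, r₂ x y

/-- The largest subset of `U` on which both `r₁` and `r₂` are left-total. Each round of pruning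
before stabilization removes a point, so `U.length` rounds suffice. -/
def core (U : List α) : List α :=
  (prune r₁ r₂)^[U.length] U

variable {r₁ r₂} {U : List α}

theorem mem_prune {x : α} :
    x ∈ prune r₁ r₂ U ↔ x ∈ U ∧ (∃ y ∈ U, r₁ x y) ∧ ∃ y ∈ U, r₂ x y := by
  simp [prune]

theorem subset_prune {S : Set α} (h₁ : LeftTotalOn r₁ S) (h₂ : LeftTotalOn r₂ S)
    (hS : S ⊆ {x | x ∈ U}) : S ⊆ {x | x ∈ prune r₁ r₂ U} := by
  intro x hx
  obtain ⟨y, hy, hxy⟩ := h₁ x hx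
  obtain ⟨z, hz, hxz⟩ := h₂ x hx
  exact mem_prune.2 ⟨hS hx, ⟨y, hS hy, hxy⟩, z, hS hz, hxz⟩

theorem prune_core : prune r₁ r₂ (core r₁ r₂ U) = core r₁ r₂ U :=
  isFixedPt_iterate_length (f := prune r₁ r₂) (fun _ => List.filter_sublist) U

theorem core_subset : core r₁ r₂ U ⊆ U :=
  Function.Iterate.rec (· ⊆ U) (List.Subset.refl U)
    (fun _ h => List.Subset.trans List.filter_sublist.subset h) U.length

theorem mem_core_iff {x : α} :
    x ∈ core r₁ r₂ U ↔
      ∃ S ⊆ {y | y ∈ U}, x ∈ S ∧ LeftTotalOn r₁ S ∧ LeftTotalOn r₂ S := by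
  constructor
  · intro hx
    have has_succ : ∀ y ∈ core r₁ r₂ U,
        (∃ z ∈ core r₁ r₂ U, r₁ y z) ∧ ∃ z ∈ core r₁ r₂ U, r₂ y z :=
      fun y hy => (mem_prune.1 (by rwa [prune_core])).2
    exact ⟨{y | y ∈ core r₁ r₂ U}, core_subset, hx, fun y hy => (has_succ y hy).1,
      fun y hy => (has_succ y hy).2⟩
  · rintro ⟨S, hS, hx, h₁, h₂⟩
    exact Function.Iterate.rec (fun V => S ⊆ {y | y ∈ V}) hS
      (fun _ => subset_prune h₁ h₂) U.length hx

end Core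

section Encoding

open Encodable

theorem encode_list_map {α : Type u} {β : Type v} [Encodable α] [Encodable β] {f : α → β}
    (hf : ∀ a, encode (f a) = encode a) (l : List α) : encode (l.map f) = encode l := by
  induction l with
  | nil => rfl
  | cons a l ih => simp only [List.map_cons, encode_list_cons, hf, ih]

-- Mathlib encodes a function on `Fin n` as the list of pairs of its arguments and values.
theorem encode_finPi {β : Type u} {γ : Type v} [Encodable β] [Encodable γ] {f : β → γ}
    (hf : ∀ b, encode (f b) = encode b) {n : ℕ} (s : Fin n → β) :
    (finPi n fun _ => β).encode s = encode (List.ofFn fun i => ((i : ℕ), f (s i))) :=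
  calc
    (finPi n fun _ => β).encode s
    _ = encode (List.Vector.ofFn fun i => (⟨i, s i⟩ : Σ _ : Fin n, β)).toList := rfl
    _ = encode (List.ofFn fun i => (⟨i, s i⟩ : Σ _ : Fin n, β)) := by
      rw [List.Vector.toList_ofFn]
    _ = encode ((List.ofFn fun i => (⟨i, s i⟩ : Σ _ : Fin n, β)).map
          fun p => ((p.1 : ℕ), f p.2)) := by
      refine (encode_list_map (fun p => ?_) _).symm
      simp only [encode_prod_val, hf]
      rfl
    _ = encode (List.ofFn fun i => ((i : ℕ), f (s i))) := by
      rw [List.map_ofFn]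
      rfl

/-- A relation on an initial segment of `ℕ`, listed row by row with explicit indices. This is
the format in which the standard encoding of `Fin n → Fin n → Bool` stores its argument. -/
abbrev Table : Type := List (ℕ × List (ℕ × Bool))

/-- The relation on `ℕ` listed by a table. -/
def Table.Adj (t : Table) (x y : ℕ) : Prop :=
  ∃ row ∈ t, row.1 = x ∧ ∃ entry ∈ row.2, entry = (y, true)

instance (t : Table) : DecidableRel t.Adj :=
  fun x y => inferInstanceAs (Decidable (∃ row ∈ t, row.1 = x ∧ ∃ entry ∈ row.2, entry = (y, true)))

/-- The table of values of a `Bool`-valued relation on `Fin n`. -/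
def table {n : ℕ} (s : Fin n → Fin n → Bool) : Table :=
  List.ofFn fun i => ((i : ℕ), List.ofFn fun j => ((j : ℕ), s i j))

theorem table_adj_iff {n : ℕ} {s : Fin n → Fin n → Bool} (x y : Fin n) :
    (table s).Adj x y ↔ s x y = true := by
  simp [table, Table.Adj, List.mem_ofFn, Fin.val_inj]

theorem encode_table {n : ℕ} (s : Fin n → Fin n → Bool) : encode (table s) = encode s :=
  (encode_finPi (fun row : Fin n → Bool => (encode_finPi (f := id) (fun _ => rfl) row).symm) s).symm

/-- The data `⟨n, s1, s2, null, root⟩` of a finite graph with the dependency on `n` removed, so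
that primitive recursive functions can take it as their argument. -/
abbrev GraphCode : Type := ℕ × Table × Table × ℕ × ℕ

/-- The non-dependent data of a finite graph. -/
def FinGraph.code (G : FinGraph) : GraphCode :=
  (G.n, table G.s1, table G.s2, G.null, G.root)

theorem FinGraph.encode_code (G : FinGraph) : Encodable.encode G.code = G.encode := by
  simp only [FinGraph.encode, FinGraph.code, encode_sigma_val, encode_prod_val, encode_table]
  rfl

end Encoding

section Primrec

open Primrec

theorem Table.primrecRel_adj : PrimrecRel fun (y : ℕ) (p : Table × ℕ) => p.1.Adj p.2 y := by
  have row_adj : PrimrecRel fun (row : ℕ × List (ℕ × Bool)) (p : ℕ × ℕ) =>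
      row.1 = p.1 ∧ ∃ entry ∈ row.2, entry = (p.2, true) :=
    PrimrecPred.and (Primrec.eq.comp (fst.comp fst) (fst.comp snd))
      (Primrec.eq.exists_mem_list.comp (snd.comp fst) (pair (snd.comp snd) (const true)))
  exact row_adj.exists_mem_list.comp (fst.comp snd) (pair (snd.comp snd) fst)

theorem primrec₂_prune :
    Primrec₂ fun (t : Table × Table) (U : List ℕ) => prune t.1.Adj t.2.Adj U := by
  have has_succ := Table.primrecRel_adj.exists_mem_list
  have keep : PrimrecRel fun (x : ℕ) (p : (Table × Table) × List ℕ) =>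
      (∃ y ∈ p.2, p.1.1.Adj x y) ∧ ∃ y ∈ p.2, p.1.2.Adj x y :=
    PrimrecPred.and
      (has_succ.comp (snd.comp snd) (pair (fst.comp (fst.comp snd)) fst))
      (has_succ.comp (snd.comp snd) (pair (snd.comp (fst.comp snd)) fst))
  classical
  exact (keep.listFilter.comp snd Primrec.id).of_eq fun p => List.filter_congr (by simp)

theorem primrec₂_core :
    Primrec₂ fun (t : Table × Table) (U : List ℕ) => core t.1.Adj t.2.Adj U :=
  nat_iterate (list_length.comp snd) snd (primrec₂_prune.comp₂ (fst.comp₂ .left) .right)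

theorem GraphCode.primrecPred_root_mem_core :
    PrimrecPred fun c : GraphCode =>
      c.2.2.2.2 ∈ core c.2.1.Adj c.2.2.1.Adj (List.range c.1) := by
  have tables : Primrec fun c : GraphCode => (c.2.1, c.2.2.1) :=
    pair (fst.comp snd) (fst.comp (snd.comp snd))
  have root : Primrec fun c : GraphCode => c.2.2.2.2 := snd.comp (snd.comp (snd.comp snd))
  refine (Primrec.eq.exists_mem_list.comp
    (primrec₂_core.comp tables (list_range.comp fst)) root).of_eq fun c => ?_
  simp only [exists_eq_right]

theorem exists_primrec_decide_encode {α : Type u} [Primcodable α] {p : α → Prop}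
    (hp : PrimrecPred p) :
    ∃ f : ℕ → Bool, Primrec f ∧ ∀ a, f (Encodable.encode a) = true ↔ p a := by
  obtain ⟨_, hp⟩ := hp
  refine ⟨fun k => ((Encodable.decode k : Option α).map fun a => decide (p a)).getD false,
    option_getD.comp (option_map .decode (hp.comp snd)) (const false), fun a => ?_⟩
  simp

end Primrec

namespace FinGraph

theorem isGraph_toPreGraph (G : FinGraph) : G.toPreGraph.IsGraph :=
  ⟨Set.toFinite _, Set.mem_univ _, Set.mem_univ _, G.root_ne_null,
    fun _ _ _ => ⟨Set.mem_univ _, Set.mem_univ _⟩, fun _ _ _ => ⟨Set.mem_univ _, Set.mem_univ _⟩,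
    G.null_s1, G.null_s2⟩

theorem exists_isHeap_maps_iff_root_mem_core (G : FinGraph) :
    (∃ (γ : Type) (H : PreGraph γ), H.IsHeap ∧ H.Maps G.toPreGraph) ↔
      (G.root : ℕ) ∈ core (table G.s1).Adj (table G.s2).Adj (List.range G.n) := by
  have range_eq : {x | x ∈ List.range G.n} = Set.range ((↑) : Fin G.n → ℕ) := by
    ext x
    simp
  rw [G.isGraph_toPreGraph.exists_isHeap_maps_iff, mem_core_iff, range_eq,
    Set.exists_subset_range_and_iff]
  simp only [leftTotalOn_image_iff table_adj_iff, Fin.val_injective.mem_set_image]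
  exact exists_congr fun S => and_iff_right (Set.subset_univ S)

end FinGraph

theorem satisfiability_over_heaps_decidable_general :
    ∃ f : ℕ → Bool, Primrec f ∧ ∀ G' : FinGraph,
      (f G'.encode = true ↔
        ∃ (γ : Type) (H : PreGraph γ), PreGraph.IsHeap H ∧
          PreGraph.Maps H G'.toPreGraph) := by
  obtain ⟨f, hf, hf_iff⟩ := exists_primrec_decide_encode GraphCode.primrecPred_root_mem_core
  refine ⟨f, hf, fun G' => ?_⟩
  rw [← G'.encode_code, hf_iff, G'.exists_isHeap_maps_iff_root_mem_core]
  rfl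

/-- Satisfiability of regular graph constraints over the class of heaps is
decidable: there is a computable (decision) function which, given (the code
of) a finite graph `G'`, decides whether there exists a heap `H` with
`H → G'`. -/
theorem satisfiability_over_heaps_decidable :
    ∃ f : ℕ → Bool, Computable f ∧ ∀ G' : FinGraph,
      (f G'.encode = true ↔
        ∃ (γ : Type) (H : PreGraph γ), PreGraph.IsHeap H ∧
          PreGraph.Maps H G'.toPreGraph) := by
  obtain ⟨f, hf, hf_iff⟩ := satisfiability_over_heaps_decidable_general
  exact ⟨f, hf.to_comp, hf_iff⟩
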